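/- arXiv:2311.15178 — 3 statements merged into one kernel-verified Lean document; each statement's English description precedes it below -/
import Mathlib

section
/- For any S-PDA with parameters (F, K, Z), the alphabet satisfies |S| ≥ ⌈K(F − Z)/(Z + 1)⌉; consequently s(F, K, Z) ≥ ⌈K(F − Z)/(Z + 1)⌉. -/
open scoped Classical

/-- A placement delivery array with parameters `(F, K, Z)` over alphabet `S`:
an `F × K` array of cells that are either empty (`none`) or an element of `S`,
such that each column has exactly `Z` empty cells, no element occurs twice in a
row or in a column, and two equal entries in positions `(j₁,k₁)`, `(j₂,k₂)`
force the cells `(j₁,k₂)` and `(j₂,k₁)` to be empty. -/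
def IsPDA {S : Type} (F K Z : ℕ) (A : Fin F → Fin K → Option S) : Prop :=
  (∀ k : Fin K, (Finset.univ.filter fun j : Fin F => A j k = none).card = Z) ∧
  (∀ (j : Fin F) (k₁ k₂ : Fin K) (t : S), A j k₁ = some t → A j k₂ = some t → k₁ = k₂) ∧
  (∀ (j₁ j₂ : Fin F) (k : Fin K) (t : S), A j₁ k = some t → A j₂ k = some t → j₁ = j₂) ∧
  (∀ (j₁ j₂ : Fin F) (k₁ k₂ : Fin K) (t : S), j₁ ≠ j₂ → k₁ ≠ k₂ →
      A j₁ k₁ = some t → A j₂ k₂ = some t → A j₁ k₂ = none ∧ A j₂ k₁ = none)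

/-- `sPDA F K Z` is the minimum size of an alphabet `S` for which an `S`-PDA with
parameters `(F, K, Z)` exists. -/
noncomputable def sPDA (F K Z : ℕ) : ℕ :=
  sInf {n : ℕ | ∃ A : Fin F → Fin K → Option (Fin n), IsPDA F K Z A}

/-!
Fix an occurrence `(j, k)` of a symbol `t`. Every other occurrence of `t` lies in its own row, and
the PDA condition makes column `k` empty in that row; as column `k` has only `Z` empty cells, `t`
occurs at most `Z + 1` times. Counting the `K (F - Z)` nonempty cells by symbol gives the bound.
It passes to the minimum because some PDA exists: leave the first `Z` rows empty and give all
other cells distinct symbols.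
-/

section Array

variable {J K S : Type*} [Fintype J] [Fintype K]

/-- The positions of the nonempty cells of an array, counted both by columns and by symbols. -/
noncomputable def nonemptyCells (A : J → K → Option S) : Finset (J × K) :=
  {p | A p.1 p.2 ≠ none}

/-- The positions at which the symbol `t` occurs in an array; over all `t` they partition the
nonempty cells. -/
noncomputable def symbolCells (A : J → K → Option S) (t : S) : Finset (J × K) :=
  {p | A p.1 p.2 = some t}

@[simp]
theorem mem_nonemptyCells {A : J → K → Option S} {p : J × K} :
    p ∈ nonemptyCells A ↔ A p.1 p.2 ≠ none := by
  simp [nonemptyCells]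

@[simp]
theorem mem_symbolCells {A : J → K → Option S} {t : S} {p : J × K} :
    p ∈ symbolCells A t ↔ A p.1 p.2 = some t := by
  simp [symbolCells]

theorem nonemptyCells_eq_biUnion_symbolCells [DecidableEq J] [DecidableEq K] [Fintype S]
    (A : J → K → Option S) :
    nonemptyCells A = Finset.univ.biUnion (symbolCells A) := by
  ext p
  simp [Option.ne_none_iff_exists']

theorem card_nonemptyCells_eq_sum (A : J → K → Option S) :
    (nonemptyCells A).card = ∑ k, (Finset.univ.filter fun j => A j k ≠ none).card := by
  simp only [nonemptyCells, Finset.card_filter, Fintype.sum_prod_type_right]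

end Array

namespace IsPDA

variable {S : Type} {F K Z : ℕ} {A : Fin F → Fin K → Option S}

theorem injOn_fst_symbolCells (hA : IsPDA F K Z A) (t : S) :
    Set.InjOn Prod.fst (symbolCells A t : Set (Fin F × Fin K)) := by
  obtain ⟨-, row_unique, -, -⟩ := hA
  rintro ⟨j, k₁⟩ h₁ ⟨_, k₂⟩ h₂ rfl
  simp only [Finset.mem_coe, mem_symbolCells] at h₁ h₂
  rw [row_unique j k₁ k₂ t h₁ h₂]

theorem eq_or_eq_none_of_eq_some (hA : IsPDA F K Z A) {j j' : Fin F} {k k' : Fin K} {t : S}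
    (h : A j k = some t) (h' : A j' k' = some t) : j' = j ∨ A j' k = none := by
  obtain ⟨-, -, column_unique, cross_empty⟩ := hA
  by_cases hk : k' = k
  · subst hk
    exact .inl (column_unique j' j k' t h' h)
  · exact or_iff_not_imp_left.mpr fun hj => (cross_empty j' j k' k t hj hk h' h).1

theorem card_symbolCells_le (hA : IsPDA F K Z A) (t : S) : (symbolCells A t).card ≤ Z + 1 := by
  obtain hempty | ⟨⟨j, k⟩, hjk⟩ := (symbolCells A t).eq_empty_or_nonempty
  · simp [hempty]
  · have rows_subset : Set.MapsTo Prod.fst (symbolCells A t : Set (Fin F × Fin K))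
        (insert j (Finset.univ.filter fun i => A i k = none) : Finset (Fin F)) := by
      intro p hp
      simpa using hA.eq_or_eq_none_of_eq_some (mem_symbolCells.mp hjk) (mem_symbolCells.mp hp)
    calc (symbolCells A t).card
        ≤ (insert j (Finset.univ.filter fun i => A i k = none)).card :=
          Finset.card_le_card_of_injOn _ rows_subset (hA.injOn_fst_symbolCells t)
      _ ≤ (Finset.univ.filter fun i => A i k = none).card + 1 := Finset.card_insert_le _ _
      _ = Z + 1 := by rw [hA.1 k]

theorem card_filter_ne_none (hA : IsPDA F K Z A) (k : Fin K) :
    (Finset.univ.filter fun j => A j k ≠ none).card = F - Z := by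
  have hsplit := Finset.card_filter_add_card_filter_not (s := Finset.univ) fun j => A j k = none
  rw [hA.1 k, Finset.card_fin] at hsplit
  exact Nat.eq_sub_of_add_eq' hsplit

theorem card_nonemptyCells (hA : IsPDA F K Z A) : (nonemptyCells A).card = K * (F - Z) := by
  simp [card_nonemptyCells_eq_sum, hA.card_filter_ne_none, -ne_eq]

theorem mul_sub_le_card_mul [Fintype S] (hA : IsPDA F K Z A) :
    K * (F - Z) ≤ Fintype.card S * (Z + 1) := by
  rw [← hA.card_nonemptyCells, nonemptyCells_eq_biUnion_symbolCells]
  exact Finset.card_biUnion_le_card_mul _ _ _ fun t _ => hA.card_symbolCells_le t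

theorem ceil_div_le_card [Fintype S] (hA : IsPDA F K Z A) :
    ⌈((K * (F - Z) : ℕ) : ℚ) / ((Z : ℚ) + 1)⌉₊ ≤ Fintype.card S := by
  rw [Nat.ceil_le, div_le_iff₀ (by positivity)]
  exact_mod_cast hA.mul_sub_le_card_mul

theorem of_forall_eq_some_imp_eq
    (hempty : ∀ k, (Finset.univ.filter fun j => A j k = none).card = Z)
    (hinj : ∀ j₁ j₂ k₁ k₂ t, A j₁ k₁ = some t → A j₂ k₂ = some t → j₁ = j₂ ∧ k₁ = k₂) :
    IsPDA F K Z A :=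
  ⟨hempty, fun j k₁ k₂ t h₁ h₂ => (hinj j j k₁ k₂ t h₁ h₂).2,
    fun j₁ j₂ k t h₁ h₂ => (hinj j₁ j₂ k k t h₁ h₂).1,
    fun j₁ j₂ k₁ k₂ t hj _ h₁ h₂ => absurd (hinj j₁ j₂ k₁ k₂ t h₁ h₂).1 hj⟩

end IsPDA

theorem exists_isPDA (K : ℕ) {F Z : ℕ} (hZ : Z ≤ F) :
    ∃ A : Fin F → Fin K → Option (Fin (F * K)), IsPDA F K Z A := by
  refine ⟨fun j k => if j.val < Z then none else some (finProdFinEquiv (j, k)),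
    .of_forall_eq_some_imp_eq (fun k => ?_) fun j₁ j₂ k₁ k₂ t h₁ h₂ => ?_⟩
  · simp [Fin.card_filter_val_lt, hZ]
  · simp only [Option.ite_none_left_eq_some, Option.some.injEq] at h₁ h₂
    exact Prod.mk.inj (finProdFinEquiv.injective (h₁.2.trans h₂.2.symm))

theorem exists_isPDA_fin_sPDA (K : ℕ) {F Z : ℕ} (hZ : Z ≤ F) :
    ∃ A : Fin F → Fin K → Option (Fin (sPDA F K Z)), IsPDA F K Z A :=
  Nat.sInf_mem (s := {n | ∃ A : Fin F → Fin K → Option (Fin n), IsPDA F K Z A})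
    ⟨F * K, exists_isPDA K hZ⟩

theorem stmt_5 (F K Z : ℕ) (hF : 0 < F) (hK : 0 < K) (hZ : Z ≤ F) :
    (∀ (S : Type) (_ : Fintype S) (A : Fin F → Fin K → Option S),
      IsPDA F K Z A → ⌈((K * (F - Z) : ℕ) : ℚ) / ((Z : ℚ) + 1)⌉₊ ≤ Fintype.card S) ∧
    ⌈((K * (F - Z) : ℕ) : ℚ) / ((Z : ℚ) + 1)⌉₊ ≤ sPDA F K Z := by
  refine ⟨fun S _ A hA => hA.ceil_div_le_card, ?_⟩
  obtain ⟨A, hA⟩ := exists_isPDA_fin_sPDA K hZ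
  simpa only [Fintype.card_fin] using hA.ceil_div_le_card
end

section
/- For every integer F ≥ 2, s(F, F, 1) = F(F − 1)/2. -/
open scoped Classical

/-!
Double count the nonempty cells of an `(F, K, Z)`-PDA. There are `K (F - Z)` of them, counted by
columns. If `t` sits in cell `(j, k)`, every other occurrence of `t` lies in a row whose cell in
column `k` is empty, and different occurrences lie in different rows, so `t` occurs at most `Z + 1`
times. Hence `K (F - Z) ≤ (Z + 1) |S|`. For `K = F` and `Z = 1` this is attained by writing the edge
`{i, j}` of the complete graph into the cell `(i, j)` and leaving the diagonal empty.
-/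

/-- The set of cells of the array `A` that contain the symbol `t`; its cardinality is the
multiplicity of `t` in the double count of nonempty cells. -/
noncomputable def occurrences {S : Type} {F K : ℕ} (A : Fin F → Fin K → Option S) (t : S) :
    Finset (Fin F × Fin K) :=
  {p | A p.1 p.2 = some t}

section Occurrences

variable {S : Type} {F K Z : ℕ} {A : Fin F → Fin K → Option S}

@[simp]
theorem mem_occurrences {t : S} {p : Fin F × Fin K} :
    p ∈ occurrences A t ↔ A p.1 p.2 = some t := by
  simp [occurrences]

theorem sum_card_occurrences [Fintype S] (A : Fin F → Fin K → Option S) :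
    ∑ t, (occurrences A t).card = ∑ k, ({j | A j k ≠ none} : Finset (Fin F)).card := by
  have cell_count (c : Option S) :
      ∑ t, (if c = some t then 1 else 0) = if c ≠ none then 1 else 0 := by
    cases c <;> simp
  calc ∑ t, (occurrences A t).card
      = ∑ t, ∑ p : Fin F × Fin K, if A p.1 p.2 = some t then 1 else 0 := by
        simp only [occurrences, Finset.card_filter]
    _ = ∑ p : Fin F × Fin K, if A p.1 p.2 ≠ none then 1 else 0 := by
        rw [Finset.sum_comm]
        exact Finset.sum_congr rfl fun p _ ↦ cell_count _
    _ = ∑ k, ({j | A j k ≠ none} : Finset (Fin F)).card := by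
        simp only [Fintype.sum_prod_type_right, Finset.card_filter]

namespace IsPDA

theorem card_column_ne_none (hA : IsPDA F K Z A) (k : Fin K) :
    ({j | A j k ≠ none} : Finset (Fin F)).card = F - Z := by
  have split_column := Finset.card_filter_add_card_filter_not
    (s := (Finset.univ : Finset (Fin F))) (fun j ↦ A j k = none)
  rw [hA.1 k, Finset.card_fin] at split_column
  exact Nat.eq_sub_of_add_eq' split_column

theorem fst_injOn_occurrences (hA : IsPDA F K Z A) (t : S) :
    Set.InjOn Prod.fst (occurrences A t : Set (Fin F × Fin K)) := by
  rintro ⟨j, k₁⟩ h₁ ⟨_, k₂⟩ h₂ rfl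
  simp only [Finset.mem_coe, mem_occurrences] at h₁ h₂
  rw [hA.2.1 j k₁ k₂ t h₁ h₂]

theorem eq_none_of_mem_occurrences (hA : IsPDA F K Z A) {t : S} {p q : Fin F × Fin K}
    (hp : p ∈ occurrences A t) (hq : q ∈ occurrences A t) (hqp : q ≠ p) : A q.1 p.2 = none := by
  have hrow : p.1 ≠ q.1 := fun h ↦ hqp (hA.fst_injOn_occurrences t hq hp h.symm)
  rw [mem_occurrences] at hp hq
  have hcol : p.2 ≠ q.2 := fun h ↦ hrow (hA.2.2.1 _ _ q.2 t (h ▸ hp) hq)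
  exact (hA.2.2.2 _ _ _ _ t hrow hcol hp hq).2

theorem card_occurrences_le (hA : IsPDA F K Z A) (t : S) : (occurrences A t).card ≤ Z + 1 := by
  obtain hempty | ⟨p, hp⟩ := (occurrences A t).eq_empty_or_nonempty
  · simp [hempty]
  have others_le : ((occurrences A t).erase p).card ≤ Z := by
    rw [← hA.1 p.2]
    refine Finset.card_le_card_of_injOn Prod.fst (fun q hq ↦ ?_)
      ((hA.fst_injOn_occurrences t).mono (Finset.coe_subset.2 (Finset.erase_subset _ _)))
    obtain ⟨hqp, hq⟩ := Finset.mem_erase.1 hq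
    simpa using hA.eq_none_of_mem_occurrences hp hq hqp
  rw [← Finset.card_erase_add_one hp]
  exact Nat.add_le_add_right others_le 1

theorem mul_sub_le_mul_card [Fintype S] (hA : IsPDA F K Z A) :
    K * (F - Z) ≤ (Z + 1) * Fintype.card S :=
  calc K * (F - Z) = ∑ k, ({j | A j k ≠ none} : Finset (Fin F)).card := by
        simp [hA.card_column_ne_none]
    _ = ∑ t, (occurrences A t).card := (sum_card_occurrences A).symm
    _ ≤ Fintype.card S * (Z + 1) :=
        Finset.sum_le_card_nsmul _ _ _ fun t _ ↦ hA.card_occurrences_le t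
    _ = (Z + 1) * Fintype.card S := mul_comm _ _

theorem map {T : Type} (hA : IsPDA F K Z A) {f : S → T} (hf : Function.Injective f) :
    IsPDA F K Z fun j k ↦ (A j k).map f := by
  have same_symbol {j₁ j₂ : Fin F} {k₁ k₂ : Fin K} {u : T} (h₁ : (A j₁ k₁).map f = some u)
      (h₂ : (A j₂ k₂).map f = some u) : ∃ t, A j₁ k₁ = some t ∧ A j₂ k₂ = some t := by
    obtain ⟨t, ht, rfl⟩ := Option.map_eq_some_iff.1 h₁
    obtain ⟨t', ht', h⟩ := Option.map_eq_some_iff.1 h₂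
    exact ⟨t, ht, hf h ▸ ht'⟩
  obtain ⟨hempty, hrow, hcol, hcross⟩ := hA
  simp only [IsPDA, Option.map_eq_none_iff]
  refine ⟨hempty, fun j k₁ k₂ u h₁ h₂ ↦ ?_, fun j₁ j₂ k u h₁ h₂ ↦ ?_,
    fun j₁ j₂ k₁ k₂ u hj hk h₁ h₂ ↦ ?_⟩ <;>
    obtain ⟨t, h₁, h₂⟩ := same_symbol h₁ h₂
  · exact hrow j k₁ k₂ t h₁ h₂
  · exact hcol j₁ j₂ k t h₁ h₂
  · exact hcross j₁ j₂ k₁ k₂ t hj hk h₁ h₂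

theorem exists_fin_card [Fintype S] (hA : IsPDA F K Z A) :
    ∃ B : Fin F → Fin K → Option (Fin (Fintype.card S)), IsPDA F K Z B :=
  ⟨_, hA.map (Fintype.equivFin S).injective⟩

theorem sPDA_le_card [Fintype S] (hA : IsPDA F K Z A) : sPDA F K Z ≤ Fintype.card S :=
  Nat.sInf_le hA.exists_fin_card

theorem mul_sub_le_mul_sPDA [Finite S] (hA : IsPDA F K Z A) :
    K * (F - Z) ≤ (Z + 1) * sPDA F K Z := by
  have := Fintype.ofFinite S
  obtain ⟨B, hB⟩ : ∃ B : Fin F → Fin K → Option (Fin (sPDA F K Z)), IsPDA F K Z B :=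
    Nat.sInf_mem (s := {n | ∃ B : Fin F → Fin K → Option (Fin n), IsPDA F K Z B})
      ⟨_, hA.exists_fin_card⟩
  simpa only [Fintype.card_fin] using hB.mul_sub_le_mul_card

end IsPDA

end Occurrences

/-- The `F × F` array with empty diagonal whose entry in an off-diagonal cell `(i, j)` is the
edge `{i, j}` of the complete graph on `Fin F`; edges are encoded as non-diagonal elements
of `Sym2 (Fin F)`. It is the optimal square PDA with one empty cell per column. -/
def edgeArray (F : ℕ) (i j : Fin F) : Option {e : Sym2 (Fin F) // ¬e.IsDiag} :=
  if h : i = j then none else some ⟨s(i, j), h⟩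

section EdgeArray

variable {F : ℕ}

@[simp]
theorem edgeArray_eq_none_iff {i j : Fin F} : edgeArray F i j = none ↔ i = j := by
  simp [edgeArray]

theorem edgeArray_eq_some_iff {i j : Fin F} {e : {e : Sym2 (Fin F) // ¬e.IsDiag}} :
    edgeArray F i j = some e ↔ s(i, j) = e := by
  obtain ⟨e, he⟩ := e
  by_cases h : i = j
  · suffices s(i, j) ≠ e by simpa [edgeArray, h] using this
    rintro rfl
    exact he h
  · simp only [edgeArray, h, dite_false, Option.some.injEq, Subtype.ext_iff]

theorem isPDA_edgeArray (F : ℕ) : IsPDA F F 1 (edgeArray F) := by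
  simp only [IsPDA, edgeArray_eq_none_iff, edgeArray_eq_some_iff]
  refine ⟨fun k ↦ Finset.card_eq_one.2 ⟨k, by ext; simp⟩, fun j k₁ k₂ e h₁ h₂ ↦ ?_,
    fun j₁ j₂ k e h₁ h₂ ↦ ?_, fun j₁ j₂ k₁ k₂ e hj _ h₁ h₂ ↦ ?_⟩
  · exact Sym2.congr_right.1 (h₁.trans h₂.symm)
  · exact Sym2.congr_left.1 (h₁.trans h₂.symm)
  · obtain ⟨hj', _⟩ | ⟨h, h'⟩ := Sym2.eq_iff.1 (h₁.trans h₂.symm)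
    · exact absurd hj' hj
    · exact ⟨h, h'.symm⟩

theorem card_sym2_fin_not_isDiag (F : ℕ) :
    Fintype.card {e : Sym2 (Fin F) // ¬e.IsDiag} = F * (F - 1) / 2 := by
  rw [Sym2.card_subtype_not_diag, Fintype.card_fin, Nat.choose_two_right]

end EdgeArray

theorem stmt_6 (F : ℕ) (hF : 2 ≤ F) :
    sPDA F F 1 = F * (F - 1) / 2 := by
  apply le_antisymm
  · exact (isPDA_edgeArray F).sPDA_le_card.trans_eq (card_sym2_fin_not_isDiag F)
  · exact Nat.div_le_of_le_mul (isPDA_edgeArray F).mul_sub_le_mul_sPDA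
end

section
/- If in an S-PDA with parameters (F, K, Z) some element of S appears in exactly Z + 1 cells, then |S| ≥ (F − Z − 1)(Z + 1) + 1. -/
open scoped Classical

/-!
Let `t` occur in exactly `Z + 1` cells, hence in `Z + 1` rows and `Z + 1` columns. A column
containing `t` is empty in the `Z` other rows of `t`, and these are all its empty cells. So the
columns of `t` are completely filled in the `F - Z - 1` rows avoiding `t`. Two equal entries of a
placement delivery array in different rows and columns force an empty cell in the subarray they
span, so a filled subarray has pairwise distinct entries. This yields `(F - Z - 1) * (Z + 1)`
elements of the alphabet, all different from `t`.
-/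

open Finset

section Array

variable {ι κ S : Type*}

/-- The rows in which column `k` of the array `A` is empty. -/
def emptyRows [Fintype ι] (A : ι → κ → Option S) (k : κ) : Finset ι :=
  {j | A j k = none}

theorem mem_emptyRows [Fintype ι] {A : ι → κ → Option S} {j : ι} {k : κ} :
    j ∈ emptyRows A k ↔ A j k = none := by
  simp [emptyRows]

variable [Fintype ι] [Fintype κ]

/-- The cells of the array `A` that contain the element `t`. -/
noncomputable def cellsOf (A : ι → κ → Option S) (t : S) : Finset (ι × κ) :=
  {p | A p.1 p.2 = some t}

/-- The rows of the array `A` in which the element `t` occurs. -/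
noncomputable def rowsOf [DecidableEq ι] (A : ι → κ → Option S) (t : S) : Finset ι :=
  (cellsOf A t).image Prod.fst

/-- The columns of the array `A` in which the element `t` occurs. -/
noncomputable def columnsOf [DecidableEq κ] (A : ι → κ → Option S) (t : S) : Finset κ :=
  (cellsOf A t).image Prod.snd

variable {A : ι → κ → Option S} {t : S}

theorem mem_cellsOf {p : ι × κ} : p ∈ cellsOf A t ↔ A p.1 p.2 = some t := by
  simp [cellsOf]

theorem mem_rowsOf [DecidableEq ι] {j : ι} : j ∈ rowsOf A t ↔ ∃ k, A j k = some t := by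
  simp [rowsOf, mem_cellsOf]

theorem mem_columnsOf [DecidableEq κ] {k : κ} : k ∈ columnsOf A t ↔ ∃ j, A j k = some t := by
  simp [columnsOf, mem_cellsOf]

end Array

namespace IsPDA

variable {S : Type} {F K Z : ℕ} {A : Fin F → Fin K → Option S} {t : S}

theorem card_emptyRows (h : IsPDA F K Z A) (k : Fin K) : #(emptyRows A k) = Z :=
  h.1 k

theorem column_unique (h : IsPDA F K Z A) {j : Fin F} {k₁ k₂ : Fin K}
    (h₁ : A j k₁ = some t) (h₂ : A j k₂ = some t) : k₁ = k₂ :=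
  h.2.1 j k₁ k₂ t h₁ h₂

theorem row_unique (h : IsPDA F K Z A) {j₁ j₂ : Fin F} {k : Fin K}
    (h₁ : A j₁ k = some t) (h₂ : A j₂ k = some t) : j₁ = j₂ :=
  h.2.2.1 j₁ j₂ k t h₁ h₂

theorem eq_none_of_row_ne (h : IsPDA F K Z A) {j₁ j₂ : Fin F} {k₁ k₂ : Fin K} (hj : j₁ ≠ j₂)
    (h₁ : A j₁ k₁ = some t) (h₂ : A j₂ k₂ = some t) : A j₁ k₂ = none := by
  have hk : k₁ ≠ k₂ := by
    rintro rfl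
    exact hj (h.row_unique h₁ h₂)
  exact (h.2.2.2 j₁ j₂ k₁ k₂ t hj hk h₁ h₂).1

theorem card_rowsOf (h : IsPDA F K Z A) (t : S) : #(rowsOf A t) = #(cellsOf A t) := by
  refine card_image_of_injOn ?_
  rintro ⟨j, k₁⟩ h₁ ⟨_, k₂⟩ h₂ rfl
  exact congrArg (Prod.mk j) (h.column_unique (mem_cellsOf.1 h₁) (mem_cellsOf.1 h₂))

theorem card_columnsOf (h : IsPDA F K Z A) (t : S) : #(columnsOf A t) = #(cellsOf A t) := by
  refine card_image_of_injOn ?_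
  rintro ⟨j₁, k⟩ h₁ ⟨j₂, _⟩ h₂ rfl
  exact congrArg (·, k) (h.row_unique (mem_cellsOf.1 h₁) (mem_cellsOf.1 h₂))

theorem erase_rowsOf_subset_emptyRows (h : IsPDA F K Z A) {i : Fin F} {k : Fin K}
    (hik : A i k = some t) : (rowsOf A t).erase i ⊆ emptyRows A k := by
  intro j hj
  obtain ⟨hji, hjt⟩ := mem_erase.1 hj
  obtain ⟨l, hjl⟩ := mem_rowsOf.1 hjt
  exact mem_emptyRows.2 (h.eq_none_of_row_ne hji hjl hik)

theorem erase_rowsOf_eq_emptyRows (h : IsPDA F K Z A) (ht : #(cellsOf A t) = Z + 1)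
    {i : Fin F} {k : Fin K} (hik : A i k = some t) :
    (rowsOf A t).erase i = emptyRows A k := by
  refine eq_of_subset_of_card_le (h.erase_rowsOf_subset_emptyRows hik) ?_
  rw [h.card_emptyRows, card_erase_of_mem (mem_rowsOf.2 ⟨k, hik⟩), h.card_rowsOf, ht,
    Nat.add_sub_cancel]

theorem ne_none_of_notMem_rowsOf (h : IsPDA F K Z A) (ht : #(cellsOf A t) = Z + 1)
    {j : Fin F} {k : Fin K} (hj : j ∉ rowsOf A t) (hk : k ∈ columnsOf A t) : A j k ≠ none := by
  intro hjk
  obtain ⟨i, hik⟩ := mem_columnsOf.1 hk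
  have hmem : j ∈ (rowsOf A t).erase i := by
    rw [h.erase_rowsOf_eq_emptyRows ht hik]
    exact mem_emptyRows.2 hjk
  exact hj (mem_of_mem_erase hmem)

theorem injOn_of_forall_ne_none (h : IsPDA F K Z A) {R : Set (Fin F)} {C : Set (Fin K)}
    (hfull : ∀ j ∈ R, ∀ k ∈ C, A j k ≠ none) :
    Set.InjOn (fun p : Fin F × Fin K => A p.1 p.2) (R ×ˢ C) := by
  rintro ⟨j₁, k₁⟩ ⟨hj₁, hk₁⟩ ⟨j₂, k₂⟩ ⟨-, hk₂⟩ heq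
  obtain ⟨s, h₁⟩ := Option.ne_none_iff_exists'.1 (hfull j₁ hj₁ k₁ hk₁)
  have h₂ : A j₂ k₂ = some s := heq.symm.trans h₁
  obtain rfl : j₁ = j₂ := by
    by_contra hj
    exact hfull j₁ hj₁ k₂ hk₂ (h.eq_none_of_row_ne hj h₁ h₂)
  exact congrArg (Prod.mk j₁) (h.column_unique h₁ h₂)

theorem card_mul_card_add_card_le [Fintype S] (h : IsPDA F K Z A) {R : Finset (Fin F)}
    {C : Finset (Fin K)} {T : Finset S} (hfull : ∀ j ∈ R, ∀ k ∈ C, A j k ≠ none)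
    (havoid : ∀ j ∈ R, ∀ k ∈ C, ∀ s ∈ T, A j k ≠ some s) :
    #R * #C + #T ≤ Fintype.card S := by
  have hmaps : Set.MapsTo (fun p : Fin F × Fin K => A p.1 p.2) (R ×ˢ C : Finset _)
      ((insertNone T)ᶜ : Finset _) := by
    rintro ⟨j, k⟩ hp
    obtain ⟨hj, hk⟩ := mem_product.1 hp
    obtain ⟨s, hs⟩ := Option.ne_none_iff_exists'.1 (hfull j hj k hk)
    have hsT : s ∉ T := fun hmem => havoid j hj k hk s hmem hs
    simpa [hs] using hsT
  have hinj : Set.InjOn (fun p : Fin F × Fin K => A p.1 p.2) (R ×ˢ C : Finset _) := by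
    rw [coe_product]
    exact h.injOn_of_forall_ne_none hfull
  have hcard := card_le_card_of_injOn _ hmaps hinj
  rw [card_product, card_compl, card_insertNone, Fintype.card_option] at hcard
  have hT : #T ≤ Fintype.card S := card_le_univ T
  omega

end IsPDA

theorem stmt_15 {S : Type} [Fintype S] (F K Z : ℕ) (A : Fin F → Fin K → Option S)
    (h : IsPDA F K Z A) (t : S)
    (ht : (Finset.univ.filter fun p : Fin F × Fin K => A p.1 p.2 = some t).card = Z + 1) :
    (F - Z - 1) * (Z + 1) + 1 ≤ Fintype.card S := by
  have hcells : #(cellsOf A t) = Z + 1 := ht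
  have hrows : #(rowsOf A t)ᶜ = F - Z - 1 := by
    rw [card_compl, Fintype.card_fin, h.card_rowsOf, hcells, Nat.sub_sub]
  have hcolumns : #(columnsOf A t) = Z + 1 := (h.card_columnsOf t).trans hcells
  have hfull : ∀ j ∈ (rowsOf A t)ᶜ, ∀ k ∈ columnsOf A t, A j k ≠ none :=
    fun j hj k hk => h.ne_none_of_notMem_rowsOf hcells (mem_compl.1 hj) hk
  have havoid : ∀ j ∈ (rowsOf A t)ᶜ, ∀ k ∈ columnsOf A t, ∀ s ∈ ({t} : Finset S),
      A j k ≠ some s := by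
    intro j hj k _ s hs hjk
    obtain rfl := mem_singleton.1 hs
    exact mem_compl.1 hj (mem_rowsOf.2 ⟨k, hjk⟩)
  simpa only [hrows, hcolumns, card_singleton] using h.card_mul_card_add_card_le hfull havoid
end
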